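/- arXiv:math/0005130 — 6 statements merged into one kernel-verified Lean document; each statement's English description precedes it below -/
import Mathlib

section
/- Let E be a real Banach space, T a strongly continuous semigroup on E, and A its generator with domain D(A). Then D(A) = E if and only if T is uniformly continuous, i.e. the operator norm ‖T(t) − id‖ tends to 0 as t → 0⁺. -/
open Filter Topology

/-- `HasGen T f g` means `g = A f` where `A` is the generator of the semigroup `T`,
i.e. `(T h f - f)/h → g` in norm as `h → 0⁺`. -/
def HasGen {E : Type*} [NormedAddCommGroup E] [NormedSpace ℝ E]
    (T : ℝ → E →L[ℝ] E) (f g : E) : Prop :=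
  Tendsto (fun h : ℝ => h⁻¹ • (T h f - f)) (𝓝[>] (0 : ℝ)) (𝓝 g)

theorem gen_aux
    (E : Type*) [NormedAddCommGroup E] [NormedSpace ℝ E] [CompleteSpace E]
    (T : ℝ → E →L[ℝ] E)
    (hT0 : T 0 = 1)
    (hTadd : ∀ s t : ℝ, 0 ≤ s → 0 ≤ t → T (s + t) = (T s).comp (T t))
    (hU : Tendsto (fun t : ℝ => ‖T t - 1‖) (𝓝[>] (0 : ℝ)) (𝓝 0)) (f : E) :
    ∃ g, HasGen T f g := by
  have hU' : ∀ ε > 0, ∃ δ > 0, ∀ h, 0 ≤ h → h ≤ δ → ‖T h - 1‖ ≤ ε := by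
    intro ε hε
    have h1 : ∀ᶠ h in 𝓝[>] (0 : ℝ), ‖T h - 1‖ < ε := hU.eventually (gt_mem_nhds hε)
    obtain ⟨d, hd, hd2⟩ := mem_nhdsGT_iff_exists_Ioc_subset.1 h1
    refine ⟨d, hd, fun h h0 hh => ?_⟩
    rcases h0.eq_or_lt with rfl | h0
    · simpa [hT0] using hε.le
    · exact le_of_lt (hd2 ⟨h0, hh⟩)
  obtain ⟨δ, hδ, hδT⟩ := hU' (1/2) (by norm_num)
  have hone : ‖(1 : E →L[ℝ] E)‖ ≤ 1 := ContinuousLinearMap.norm_id_le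
  have hb : ∀ h, 0 ≤ h → h ≤ δ → ‖T h‖ ≤ 2 := by
    intro h h0 h1
    have := norm_add_le (T h - 1) 1
    rw [sub_add_cancel] at this
    linarith [hδT h h0 h1]
  have hle : ∀ s u, 0 ≤ s → s ≤ u → u ≤ δ → ‖T u - T s‖ ≤ 2 * ‖T (u - s) - 1‖ := by
    intro s u h0 h1 h2
    have : T u - T s = T s * (T (u - s) - 1) := by
      rw [mul_sub, mul_one]
      have := hTadd s (u - s) h0 (by linarith)
      rw [add_sub_cancel] at this
      rw [this]; rfl
    rw [this]
    refine (norm_mul_le _ _).trans ?_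
    gcongr
    exact hb s h0 (by linarith)
  have hc : ContinuousOn T (Set.Icc 0 δ) := by
    rw [Metric.continuousOn_iff]
    intro s hs ε hε
    obtain ⟨η, hη, hη2⟩ := hU' (ε/4) (by positivity)
    refine ⟨η, hη, fun u hu hd => ?_⟩
    rw [Real.dist_eq, abs_lt] at hd
    rw [dist_eq_norm]
    rcases le_total s u with h | h
    · have := hle s u hs.1 h hu.2
      have := hη2 (u - s) (by linarith) (by linarith)
      linarith
    · rw [norm_sub_rev]
      have := hle u s hu.1 h hs.2
      have := hη2 (s - u) (by linarith) (by linarith)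
      linarith
  set S : ℝ → E →L[ℝ] E := fun s => T (max 0 (min δ s)) with hS
  have hSc : Continuous S := by
    refine hc.comp_continuous (by fun_prop) fun s => ⟨le_max_left _ _, max_le hδ.le (min_le_left _ _)⟩
  have hST : ∀ s, 0 ≤ s → s ≤ δ → S s = T s := by
    intro s h0 h1
    simp [hS, h0, h1]
  have hi : ∀ a b, IntervalIntegrable S MeasureTheory.volume a b := fun a b =>
    hSc.intervalIntegrable a b
  set V : ℝ → E →L[ℝ] E := fun t => ∫ s in (0:ℝ)..t, S s with hV
  have hVd : ∀ x, HasDerivAt V (S x) x := fun x => hSc.integral_hasStrictDerivAt 0 x |>.hasDerivAt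
  obtain ⟨t, ht, htδ⟩ : ∃ t, 0 < t ∧ t < δ := exists_between hδ
  have hunit : IsUnit (t⁻¹ • V t) := by
    have h1 : t⁻¹ • V t - 1 = t⁻¹ • ∫ s in (0:ℝ)..t, (S s - 1) := by
      rw [intervalIntegral.integral_sub (hi _ _) (by simp), intervalIntegral.integral_const,
        smul_sub, sub_zero, smul_smul, inv_mul_cancel₀ ht.ne', one_smul]
    have h2 : ‖∫ s in (0:ℝ)..t, (S s - 1)‖ ≤ 1/2 * |t - 0| := by
      apply intervalIntegral.norm_integral_le_of_norm_le_const
      intro s hs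
      rw [Set.uIoc_of_le ht.le] at hs
      rw [hST s hs.1.le (by linarith [hs.2])]
      exact hδT s hs.1.le (by linarith [hs.2])
    have h3 : ‖1 - t⁻¹ • V t‖ < 1 := by
      rw [norm_sub_rev, h1, norm_smul, norm_inv, Real.norm_eq_abs]
      rw [sub_zero, abs_of_pos ht] at h2
      rw [abs_of_pos ht]
      calc _ ≤ t⁻¹ * (1/2 * t) := by gcongr
        _ = 1/2 := by field_simp
        _ < 1 := by norm_num
    simpa using isUnit_one_sub_of_norm_lt_one h3
  obtain ⟨u, hu⟩ := hunit
  obtain ⟨g, hg⟩ : ∃ g, V t g = f := by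
    refine ⟨t⁻¹ • (↑u⁻¹ : E →L[ℝ] E) f, ?_⟩
    have := congrArg (fun L : E →L[ℝ] E => L f) u.mul_inv
    rw [hu] at this
    simpa using this
  have key : ∀ h, 0 ≤ h → h ≤ δ - t → T h * V t - V t = (V (t + h) - V t) - V h := by
    intro h h0 h1
    have e1 : T h * V t = ∫ s in (0:ℝ)..t, T h * S s := by
      exact (((ContinuousLinearMap.mul ℝ (E →L[ℝ] E)) (T h)).intervalIntegral_comp_comm (hi 0 t)).symm
    have e2 : ∫ s in (0:ℝ)..t, T h * S s = ∫ s in (0:ℝ)..t, S (s + h) := by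
      apply intervalIntegral.integral_congr
      intro s hs
      rw [Set.uIcc_of_le ht.le] at hs
      simp only
      rw [hST s hs.1 (by linarith [hs.2]), hST (s + h) (by linarith [hs.1]) (by linarith [hs.2]),
        add_comm s h, hTadd h s h0 hs.1]
      rfl
    rw [e1, e2, intervalIntegral.integral_comp_add_right, zero_add,
      ← intervalIntegral.integral_interval_sub_left (hi 0 (t+h)) (hi 0 h)]
    simp only [hV]
    abel
  have hlim : Tendsto (fun h : ℝ => h⁻¹ • (T h * V t - V t)) (𝓝[>] 0) (𝓝 (S t - S 0)) := by
    have a1 := (hasDerivAt_iff_tendsto_slope_zero.1 (hVd t)).mono_left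
      (nhdsWithin_mono 0 (fun x (hx : 0 < x) => hx.ne') : 𝓝[>] (0:ℝ) ≤ 𝓝[≠] 0)
    have a2 := (hasDerivAt_iff_tendsto_slope_zero.1 (hVd 0)).mono_left
      (nhdsWithin_mono 0 (fun x (hx : 0 < x) => hx.ne') : 𝓝[>] (0:ℝ) ≤ 𝓝[≠] 0)
    refine (a1.sub a2).congr' ?_
    filter_upwards [Ioc_mem_nhdsGT (show (0:ℝ) < δ - t by linarith)] with h hh
    rw [key h hh.1.le hh.2]
    have : V 0 = 0 := by simp [hV]
    rw [zero_add, this, sub_zero, ← smul_sub]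
  refine ⟨(S t - S 0) g, ?_⟩
  have := ((ContinuousLinearMap.apply ℝ E g).continuous.tendsto (S t - S 0)).comp hlim
  unfold HasGen
  rw [← hg]
  exact this

theorem domain_full_iff_uniformly_continuous
    (E : Type*) [NormedAddCommGroup E] [NormedSpace ℝ E] [CompleteSpace E]
    (T : ℝ → E →L[ℝ] E)
    (hT0 : T 0 = 1)
    (hTadd : ∀ s t : ℝ, 0 ≤ s → 0 ≤ t → T (s + t) = (T s).comp (T t))
    (hTcont : ∀ f : E,
      Tendsto (fun t : ℝ => ‖T t f - f‖) (𝓝[>] (0 : ℝ)) (𝓝 0)) :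
    ({f : E | ∃ g, HasGen T f g} = Set.univ) ↔
      Tendsto (fun t : ℝ => ‖T t - 1‖) (𝓝[>] (0 : ℝ)) (𝓝 0) := by
  constructor
  · intro H
    apply tendsto_of_seq_tendsto
    intro x hx
    have hx' := tendsto_nhdsWithin_iff.1 hx
    obtain ⟨C, hC⟩ := banach_steinhaus (g := fun n => (x n)⁻¹ • (T (x n) - 1)) (by
      intro f
      obtain ⟨g, hg⟩ : f ∈ {f : E | ∃ g, HasGen T f g} := by rw [H]; trivial
      have h1 := (Tendsto.comp hg hx).norm.bddAbove_range
      obtain ⟨C, hC⟩ := h1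
      exact ⟨C, fun n => hC ⟨n, rfl⟩⟩)
    have hz : Tendsto (fun n => x n * C) atTop (𝓝 0) := by
      simpa using hx'.1.mul_const C
    refine squeeze_zero' (Eventually.of_forall fun n => norm_nonneg _) ?_ hz
    filter_upwards [hx'.2] with n hn
    have hn : 0 < x n := hn
    have h2 := hC n
    rw [norm_smul, norm_inv, Real.norm_eq_abs, abs_of_pos hn, inv_mul_le_iff₀ hn] at h2
    exact h2
  · intro H
    exact Set.eq_univ_of_forall fun f => gen_aux E T hT0 hTadd H f
end

section
/- For every finite set F of real numbers, every ε > 0, and every natural number N, there exists a natural number k with k ≥ N such that |sin(k·t)| < ε for all t ∈ F. -/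
theorem sin_simultaneously_small_on_finset
    (F : Finset ℝ) (ε : ℝ) (hε : 0 < ε) (N : ℕ) :
    ∃ k : ℕ, N ≤ k ∧ ∀ t ∈ F, |Real.sin (k * t)| < ε := by
  have h := mapClusterPt_one_atTop_pow (fun t : F => Circle.exp (t : ℝ))
  have hU : {g : F → Circle | ∀ t, |((g t : Circle) : ℂ).im| < ε} ∈ nhds (1 : F → Circle) := by
    have ho : IsOpen {g : F → Circle | ∀ t, |((g t : Circle) : ℂ).im| < ε} := by
      simp only [Set.setOf_forall]
      refine isOpen_iInter_of_finite fun t => isOpen_lt ?_ continuous_const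
      exact (Complex.continuous_im.comp
        (continuous_subtype_val.comp (continuous_apply t))).abs
    refine ho.mem_nhds ?_
    simp [hε]
  obtain ⟨k, hk, hkU⟩ := Filter.frequently_atTop.1 (h.frequently hU) N
  refine ⟨k, hk, fun t ht => ?_⟩
  have h1 := hkU ⟨t, ht⟩
  have h2 : (Circle.exp t) ^ k = Circle.exp (k * t) := by
    ext
    simp only [Circle.coe_pow, Circle.coe_exp, ← Complex.exp_nat_mul]
    push_cast
    ring_nf
  simp only [Pi.pow_apply, h2, Circle.coe_exp, Complex.exp_ofReal_mul_I_im] at h1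
  exact h1
end

section
/- Let U be a countably incomplete ultrafilter on a set I and let E be any normed real vector space (not necessarily complete). Then the quotient space ℓ∞(I,E)/c_U, equipped with the quotient norm ‖F + c_U‖ = inf{‖F − G‖ : G ∈ c_U}, is complete, i.e. a Banach space. -/
open scoped ENNReal
noncomputable def cU (I : Type*) (E : Type*) [NormedAddCommGroup E] [NormedSpace ℝ E]
    (U : Filter I) : Submodule ℝ (lp (fun _ : I => E) ∞) where
  carrier := {F : lp (fun _ : I => E) ∞ | ∀ ε : ℝ, 0 < ε → {i : I | ‖F i‖ < ε} ∈ U}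
  zero_mem' := by
    intro ε hε
    refine Filter.mem_of_superset Filter.univ_mem ?_
    intro i _
    simp [hε]
  add_mem' := by
    intro a b ha hb ε hε
    refine Filter.mem_of_superset
      (Filter.inter_mem (ha (ε / 2) (by positivity)) (hb (ε / 2) (by positivity))) ?_
    rintro i ⟨h1, h2⟩
    have : (a + b) i = a i + b i := by
      rw [lp.coeFn_add]; rfl
    simp only [Set.mem_setOf_eq] at h1 h2 ⊢
    rw [this]
    calc ‖a i + b i‖ ≤ ‖a i‖ + ‖b i‖ := norm_add_le _ _
      _ < ε := by linarith
  smul_mem' := by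
    intro c x hx ε hε
    refine Filter.mem_of_superset (hx (ε / (|c| + 1)) (by positivity)) ?_
    intro i hi
    simp only [Set.mem_setOf_eq] at hi ⊢
    have : (c • x) i = c • x i := by
      rw [lp.coeFn_smul]; rfl
    rw [this, norm_smul]
    have h1 : ‖c‖ = |c| := Real.norm_eq_abs c
    have h2 : (0:ℝ) ≤ |c| := abs_nonneg c
    have h3 : ‖x i‖ ≥ 0 := norm_nonneg _
    rw [h1]
    calc |c| * ‖x i‖ ≤ (|c| + 1) * ‖x i‖ := by nlinarith
      _ < (|c| + 1) * (ε / (|c| + 1)) := by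
          exact mul_lt_mul_of_pos_left hi (by positivity)
      _ = ε := by field_simp

theorem cU_norm_mk_le {I : Type*} {E : Type*} [NormedAddCommGroup E] [NormedSpace ℝ E]
    (U : Filter I) (F : lp (fun _ : I => E) ∞) (c : ℝ) (hc : 0 ≤ c)
    (h : {i | ‖F i‖ ≤ c} ∈ U) : ‖(cU I E U).mkQ F‖ ≤ c := by
  classical
  let g : I → E := fun i => if ‖F i‖ ≤ c then F i else 0
  have hgb : ∀ i, ‖g i‖ ≤ c := by
    intro i
    by_cases hi : ‖F i‖ ≤ c
    · simp only [g, if_pos hi]; exact hi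
    · simp only [g, if_neg hi, norm_zero]; exact hc
  have hg : Memℓp g ∞ := memℓp_infty ⟨c, by rintro _ ⟨i, rfl⟩; exact hgb i⟩
  let G : lp (fun _ : I => E) ∞ := ⟨g, hg⟩
  have hG : ‖G‖ ≤ c := lp.norm_le_of_forall_le hc hgb
  have hmem : F - G ∈ cU I E U := by
    intro ε hε
    refine Filter.mem_of_superset h ?_
    intro i hi
    have h1 : (F - G) i = F i - g i := by rw [lp.coeFn_sub]; rfl
    have h2 : g i = F i := if_pos hi
    simp only [Set.mem_setOf_eq]
    rw [h1, h2, sub_self, norm_zero]; exact hε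
  have heq : (cU I E U).mkQ F = (cU I E U).mkQ G :=
    (Submodule.Quotient.eq _).2 hmem
  rw [heq]
  exact (Submodule.Quotient.norm_mk_le _ G).trans hG

theorem cU_mem_of_norm_lt {I : Type*} {E : Type*} [NormedAddCommGroup E] [NormedSpace ℝ E]
    (U : Filter I) (F : lp (fun _ : I => E) ∞) (c : ℝ)
    (h : ‖(cU I E U).mkQ F‖ < c) : {i | ‖F i‖ < c} ∈ U := by
  obtain ⟨G, hG, hGc⟩ := Submodule.Quotient.norm_mk_lt
    ((cU I E U).mkQ F) (sub_pos.2 h)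
  have hGc' : ‖G‖ < c := by linarith
  have hmem : F - G ∈ cU I E U := (Submodule.Quotient.eq _).1 hG.symm
  refine Filter.mem_of_superset (hmem (c - ‖G‖) (sub_pos.2 hGc')) ?_
  intro i hi
  have h1 : (F - G) i = F i - G i := by rw [lp.coeFn_sub]; rfl
  simp only [Set.mem_setOf_eq] at hi ⊢
  rw [h1] at hi
  have h2 := lp.norm_apply_le_norm ENNReal.top_ne_zero G i
  have h3 := norm_sub_norm_le (F i) (G i)
  linarith

theorem quotient_complete
    (I : Type*) (E : Type*) [NormedAddCommGroup E] [NormedSpace ℝ E]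
    (U : Ultrafilter I)
    (hU : ∃ A : ℕ → Set I, (∀ n, A n ∈ U) ∧ (⋂ n, A n) ∉ U) :
    CompleteSpace ((lp (fun _ : I => E) ∞) ⧸ cU I E (U : Filter I)) := by
  classical
  obtain ⟨A, hA, hAn⟩ := hU
  let B : ℕ → ℝ := fun n => (1 / 2 : ℝ) ^ n
  have hB : ∀ n, 0 < B n := fun n => by positivity
  have hB0 : Filter.Tendsto B Filter.atTop (nhds 0) :=
    tendsto_pow_atTop_nhds_zero_of_lt_one (by norm_num) (by norm_num)
  refine Metric.complete_of_convergent_controlled_sequences B hB ?_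
  intro u hu
  choose F hF using fun n => (cU I E (U : Filter I)).mkQ_surjective (u n)
  have hFd : ∀ k n, k ≤ n → {i | ‖(F k - F n) i‖ < B k} ∈ (U : Filter I) := by
    intro k n hkn
    apply cU_mem_of_norm_lt
    rw [map_sub, hF, hF, ← dist_eq_norm]
    exact hu k k n le_rfl hkn
  let S : ℕ → Set I := fun n => A n ∩ {i | ∀ k ≤ n, ‖(F k - F n) i‖ < B k}
  have hS : ∀ n, S n ∈ (U : Filter I) := by
    intro n
    refine Filter.inter_mem (hA n) ?_
    have := (Filter.eventually_all_finite (Set.finite_Iic n)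
      (p := fun k i => ‖(F k - F n) i‖ < B k) (l := (U : Filter I))).2
      (fun k hk => hFd k n hk)
    exact this
  have hZ : {i | ∃ n, i ∉ S n} ∈ (U : Filter I) := by
    have := Ultrafilter.compl_mem_iff_notMem.2 hAn
    refine Filter.mem_of_superset this ?_
    intro i hi
    simp only [Set.mem_compl_iff, Set.mem_iInter, not_forall] at hi
    obtain ⟨n, hn⟩ := hi
    exact ⟨n, fun h => hn h.1⟩
  have key : ∀ i, ∃ h : E, ‖h‖ ≤ ‖F 0‖ + 1 ∧
      ∀ k, (∀ m ≤ k, i ∈ S m) → (∃ n, i ∉ S n) → ‖F k i - h‖ ≤ B k := by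
    intro i
    by_cases hi : ∃ n, i ∉ S n
    · rcases hN : Nat.find hi with _ | N
      · refine ⟨0, by rw [norm_zero]; positivity, fun k hk _ => ?_⟩
        have := Nat.find_spec hi
        rw [hN] at this
        exact absurd (hk 0 (Nat.zero_le _)) this
      · have hsp := Nat.find_spec hi
        rw [hN] at hsp
        have hNS : i ∈ S N := not_not.1 (Nat.find_min hi (m := N) (by omega))
        have hd : ∀ k ≤ N, ‖F k i - F N i‖ < B k := by
          intro k hk
          have := hNS.2 k hk
          rwa [lp.coeFn_sub] at this
        refine ⟨F N i, ?_, fun k hk _ => ?_⟩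
        · have h1 := hd 0 (Nat.zero_le _)
          have h2 := lp.norm_apply_le_norm ENNReal.top_ne_zero (F 0) i
          have h3 := norm_sub_norm_le (F N i) (F 0 i)
          rw [norm_sub_rev] at h3
          have h4 : B 0 = 1 := pow_zero _
          linarith
        · refine (hd k ?_).le
          by_contra hlt
          exact hsp (hk (N + 1) (by omega))
    · exact ⟨0, by rw [norm_zero]; positivity, fun k _ h => absurd h hi⟩
  choose h hb hk using key
  let H : lp (fun _ : I => E) ∞ :=
    ⟨h, memℓp_infty ⟨‖F 0‖ + 1, by rintro _ ⟨i, rfl⟩; exact hb i⟩⟩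
  refine ⟨(cU I E (U : Filter I)).mkQ H, ?_⟩
  rw [tendsto_iff_dist_tendsto_zero]
  refine squeeze_zero (fun _ => dist_nonneg) (fun k => ?_) hB0
  rw [dist_eq_norm, ← hF, ← map_sub]
  refine cU_norm_mk_le _ _ _ (hB k).le ?_
  have hT : {i | ∀ m ≤ k, i ∈ S m} ∈ (U : Filter I) :=
    (Filter.eventually_all_finite (Set.finite_Iic k)
      (p := fun m i => i ∈ S m) (l := (U : Filter I))).2 (fun m _ => hS m)
  refine Filter.mem_of_superset (Filter.inter_mem hT hZ) ?_
  rintro i ⟨h1, h2⟩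
  have := hk i k h1 h2
  simp only [Set.mem_setOf_eq]
  rw [lp.coeFn_sub]
  exact this
end

section
/- Let E be a real Banach space, T a strongly continuous semigroup on E, I an infinite set, and define the semigroup T̃ on ℓ∞(I,E) by (T̃(t)F)(i) = T(t)(F(i)). Then T̃ is strongly continuous on ℓ∞(I,E) (i.e. sup_{i∈I} ‖T(t)F(i) − F(i)‖ → 0 as t → 0⁺ for every F ∈ ℓ∞(I,E)) if and only if T is uniformly continuous on E (i.e. the operator norm ‖T(t) − id‖ → 0 as t → 0⁺). -/
open Filter Topology
open scoped ENNReal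

theorem lifted_semigroup_strongly_continuous_iff_uniformly_continuous
    (E : Type*) [NormedAddCommGroup E] [NormedSpace ℝ E] [CompleteSpace E]
    (T : ℝ → E →L[ℝ] E)
    (hT0 : T 0 = 1)
    (hTadd : ∀ s t : ℝ, 0 ≤ s → 0 ≤ t → T (s + t) = (T s).comp (T t))
    (hTcont : ∀ f : E,
      Tendsto (fun t : ℝ => ‖T t f - f‖) (𝓝[>] (0 : ℝ)) (𝓝 0))
    (I : Type*) [Infinite I] :
    (∀ F : lp (fun _ : I => E) ∞,
        Tendsto (fun t : ℝ => ⨆ i : I, ‖T t (F i) - F i‖) (𝓝[>] (0 : ℝ)) (𝓝 0)) ↔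
      Tendsto (fun t : ℝ => ‖T t - 1‖) (𝓝[>] (0 : ℝ)) (𝓝 0) := by
  have key : ∀ (F : lp (fun _ : I => E) ∞) (t : ℝ) (i : I),
      ‖T t (F i) - F i‖ ≤ ‖T t - 1‖ * ‖F‖ := by
    intro F t i
    have h1 : T t (F i) - F i = (T t - 1) (F i) := by simp
    rw [h1]
    refine ((T t - 1).le_opNorm (F i)).trans ?_
    exact mul_le_mul_of_nonneg_left
      (lp.norm_apply_le_norm ENNReal.top_ne_zero F i) (norm_nonneg _)
  constructor
  · intro H
    by_contra hnot
    rw [Metric.tendsto_nhds] at hnot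
    push Not at hnot
    obtain ⟨ε, hε, hfr⟩ := hnot
    obtain ⟨ts, hts, hp⟩ := exists_seq_forall_of_frequently hfr
    have hx : ∀ n, ∃ x : E, ‖x‖ < 1 ∧ ε / 2 < ‖(T (ts n) - 1) x‖ := by
      intro n
      apply ContinuousLinearMap.exists_lt_apply_of_lt_opNorm
      have h := hp n
      simp at h
      linarith
    choose x hx1 hx2 using hx
    let e : ℕ ↪ I := Infinite.natEmbedding I
    have hmem : Memℓp (fun i : I => x (Function.invFun e i)) ∞ := by
      apply memℓp_infty
      refine ⟨1, ?_⟩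
      rintro _ ⟨i, rfl⟩
      exact (hx1 _).le
    let F : lp (fun _ : I => E) ∞ := ⟨fun i : I => x (Function.invFun e i), hmem⟩
    have hF : ∀ n, F (e n) = x n := by
      intro n
      change x (Function.invFun e (e n)) = x n
      rw [Function.leftInverse_invFun e.injective n]
    have hlim := (H F).comp hts
    have hev := hlim.eventually (gt_mem_nhds (half_pos hε))
    obtain ⟨n, hn⟩ := hev.exists
    have hle : ‖T (ts n) (F (e n)) - F (e n)‖ ≤ ⨆ i : I, ‖T (ts n) (F i) - F i‖ :=
      le_ciSup (f := fun i : I => ‖T (ts n) (F i) - F i‖)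
        ⟨‖T (ts n) - 1‖ * ‖F‖, by rintro _ ⟨i, rfl⟩; exact key F _ i⟩ (e n)
    rw [hF n] at hle
    have h2 : ε / 2 < ‖T (ts n) (x n) - x n‖ := by simpa using hx2 n
    exact absurd hn (not_lt.mpr (h2.le.trans hle))
  · intro H F
    refine squeeze_zero (g := fun t => ‖T t - 1‖ * ‖F‖) ?_ ?_ ?_
    · intro t
      exact Real.iSup_nonneg fun i => norm_nonneg _
    · intro t
      exact ciSup_le fun i => key F t i
    · simpa using H.mul_const ‖F‖
end

section
/- Let E be a real Banach space, T a strongly continuous semigroup on E, I a set, U a filter on I, and let m^T := {F ∈ ℓ∞(I,E) : sup_{i∈I} ‖T(t)F(i) − F(i)‖ → 0 as t → 0⁺}. Then for every F ∈ m^T, the distance from F to c_U ∩ m^T equals the distance from F to c_U: inf{‖F − G‖ : G ∈ c_U ∩ m^T} = inf{‖F − G‖ : G ∈ c_U}. (Hence the canonical map m^T/(c_U ∩ m^T) → ℓ∞(I,E)/c_U is a well-defined injective isometry.) -/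
open Filter Topology
open scoped ENNReal

theorem infDist_to_cU_inter_mT_eq_infDist_to_cU
    (E : Type*) [NormedAddCommGroup E] [NormedSpace ℝ E] [CompleteSpace E]
    (T : ℝ → E →L[ℝ] E)
    (hT0 : T 0 = 1)
    (hTadd : ∀ s t : ℝ, 0 ≤ s → 0 ≤ t → T (s + t) = (T s).comp (T t))
    (hTcont : ∀ f : E,
      Tendsto (fun t : ℝ => ‖T t f - f‖) (𝓝[>] (0 : ℝ)) (𝓝 0))
    (I : Type*) (U : Filter I) :
    ∀ F ∈ {F : lp (fun _ : I => E) ∞ |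
        Tendsto (fun t : ℝ => ⨆ i : I, ‖T t (F i) - F i‖) (𝓝[>] (0 : ℝ)) (𝓝 0)},
      Metric.infDist F
        ({G : lp (fun _ : I => E) ∞ | ∀ ε : ℝ, 0 < ε → {i : I | ‖G i‖ < ε} ∈ U} ∩
          {G : lp (fun _ : I => E) ∞ |
            Tendsto (fun t : ℝ => ⨆ i : I, ‖T t (G i) - G i‖) (𝓝[>] (0 : ℝ)) (𝓝 0)}) =
      Metric.infDist F
        {G : lp (fun _ : I => E) ∞ | ∀ ε : ℝ, 0 < ε → {i : I | ‖G i‖ < ε} ∈ U} := by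
  intro F hF
  have hF' : Tendsto (fun t : ℝ => ⨆ i : I, ‖T t (F i) - F i‖) (𝓝[>] (0 : ℝ)) (𝓝 0) := hF
  have hFn : ∀ i, ‖F i‖ ≤ ‖F‖ := fun i => lp.norm_apply_le_norm (by simp) F i
  have hbdd : ∀ t : ℝ, BddAbove (Set.range fun i : I => ‖T t (F i) - F i‖) := by
    intro t
    refine ⟨‖T t‖ * ‖F‖ + ‖F‖, ?_⟩
    rintro _ ⟨i, rfl⟩
    calc ‖T t (F i) - F i‖ ≤ ‖T t (F i)‖ + ‖F i‖ := norm_sub_le _ _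
      _ ≤ ‖T t‖ * ‖F i‖ + ‖F i‖ := by gcongr; exact (T t).le_opNorm _
      _ ≤ _ := by gcongr <;> exact hFn i
  -- the zero function lies in both sets
  have h0c : (0 : lp (fun _ : I => E) ∞) ∈
      {G : lp (fun _ : I => E) ∞ | ∀ ε : ℝ, 0 < ε → {i : I | ‖G i‖ < ε} ∈ U} := by
    intro ε hε
    simp [hε]
  have h0m : (0 : lp (fun _ : I => E) ∞) ∈
      {G : lp (fun _ : I => E) ∞ |
        Tendsto (fun t : ℝ => ⨆ i : I, ‖T t (G i) - G i‖) (𝓝[>] (0 : ℝ)) (𝓝 0)} := by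
    simp
  apply le_antisymm
  · rw [Metric.le_infDist ⟨0, h0c⟩]
    intro G hG
    apply le_of_forall_pos_le_add
    intro ε hε
    set c : ℝ := dist F G + ε with hc
    have hcpos : 0 < c := by positivity
    -- radial truncation of F at level c
    let φ : I → ℝ := fun i => 1 - c / max ‖F i‖ c
    have hmpos : ∀ i, 0 < max ‖F i‖ c := fun i => lt_max_of_lt_right hcpos
    have hφ0 : ∀ i, 0 ≤ φ i := fun i =>
      sub_nonneg.2 ((div_le_one (hmpos i)).2 (le_max_right _ _))
    have hφ1 : ∀ i, φ i ≤ 1 := fun i =>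
      sub_le_self _ (div_nonneg hcpos.le (hmpos i).le)
    have hmem : Memℓp (fun i => φ i • F i : I → E) ∞ := by
      apply memℓp_infty
      refine ⟨‖F‖, ?_⟩
      rintro _ ⟨i, rfl⟩
      change ‖φ i • F i‖ ≤ ‖F‖
      rw [norm_smul, Real.norm_of_nonneg (hφ0 i)]
      exact (mul_le_of_le_one_left (norm_nonneg _) (hφ1 i)).trans (hFn i)
    let H : lp (fun _ : I => E) ∞ := ⟨fun i => φ i • F i, hmem⟩
    have hH : ∀ i, H i = φ i • F i := fun i => rfl
    have hdist : dist F H ≤ c := by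
      rw [dist_eq_norm]
      apply lp.norm_le_of_forall_le hcpos.le
      intro i
      have e : (F - H) i = (c / max ‖F i‖ c) • F i := by
        change F i - H i = _
        rw [hH]
        simp only [φ, sub_smul, one_smul, sub_sub_cancel]
      rw [e, norm_smul, Real.norm_of_nonneg (div_nonneg hcpos.le (hmpos i).le),
        div_mul_eq_mul_div, div_le_iff₀ (hmpos i)]
      exact mul_le_mul_of_nonneg_left (le_max_left _ _) hcpos.le
    refine le_trans (Metric.infDist_le_dist_of_mem (y := H) ?_) hdist
    refine ⟨?_, ?_⟩
    · intro δ hδ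
      refine Filter.mem_of_superset (hG ε hε) ?_
      intro i hi
      have hi' : ‖G i‖ < ε := hi
      have h1 : ‖F i - G i‖ ≤ dist F G := by
        rw [dist_eq_norm]
        exact lp.norm_apply_le_norm (by simp) (F - G) i
      have h2 : ‖F i‖ ≤ c := by
        have := norm_le_norm_sub_add (F i) (G i)
        linarith
      have h3 : φ i = 0 := by
        simp only [φ, max_eq_right h2, div_self hcpos.ne', sub_self]
      change ‖H i‖ < δ
      rw [hH, h3, zero_smul, norm_zero]
      exact hδ
    · refine squeeze_zero (fun t => Real.iSup_nonneg fun i => norm_nonneg _) (fun t => ?_) hF'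
      refine Real.iSup_le (fun i => ?_) (Real.iSup_nonneg fun i => norm_nonneg _)
      refine le_trans ?_ (le_ciSup (hbdd t) i)
      rw [hH, map_smul, ← smul_sub, norm_smul, Real.norm_of_nonneg (hφ0 i)]
      exact mul_le_of_le_one_left (norm_nonneg _) (hφ1 i)
  · exact Metric.infDist_le_infDist_of_subset Set.inter_subset_left ⟨0, h0c, h0m⟩
end

section
/- Let E be a real Banach space, T a strongly continuous semigroup on E, I a set, and U a countably incomplete ultrafilter on I. Let F ∈ ℓ∞(I,E) be such that for every family (h_i)_{i∈I} of nonnegative reals with h_i → 0 along U, one has ‖T(h_i)F(i) − F(i)‖ → 0 along U. Then there exists G ∈ ℓ∞(I,E) with sup_{i∈I} ‖T(t)G(i) − G(i)‖ → 0 as t → 0⁺ (i.e. G ∈ m^T) such that ‖F(i) − G(i)‖ → 0 along U. (This is the classical formulation of the identification of the nonstandard F-product Ê_T with the classical F-product m^T/(c_U ∩ m^T).) -/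
open Filter Topology

theorem aux_bound
    {E : Type*} [NormedAddCommGroup E] [NormedSpace ℝ E] [CompleteSpace E]
    (T : ℝ → E →L[ℝ] E)
    (hT0 : T 0 = 1)
    (hTcont : ∀ f : E,
      Tendsto (fun t : ℝ => ‖T t f - f‖) (𝓝[>] (0 : ℝ)) (𝓝 0)) :
    ∃ a > 0, ∃ M ≥ 0, ∀ t, 0 ≤ t → t ≤ a → ‖T t‖ ≤ M := by
  by_contra hcon
  push Not at hcon
  have h1 : ∀ n : ℕ, ∃ t : ℝ, 0 ≤ t ∧ t ≤ 1 / ((n : ℝ) + 1) ∧ max (n : ℝ) ‖T 0‖ < ‖T t‖ :=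
    fun n => hcon _ (by positivity) _ (by positivity)
  choose t ht0 ht1 ht2 using h1
  have hpos : ∀ n, 0 < t n := by
    intro n
    rcases (ht0 n).lt_or_eq with h | h
    · exact h
    · have := ht2 n
      rw [← h] at this
      exact absurd (lt_of_le_of_lt (le_max_right _ _) this) (lt_irrefl _)
  have hlim : Tendsto t atTop (𝓝[>] 0) := by
    refine tendsto_nhdsWithin_iff.2 ⟨?_, Eventually.of_forall hpos⟩
    exact squeeze_zero ht0 ht1 tendsto_one_div_add_atTop_nhds_zero_nat
  have hb : ∀ f : E, ∃ C, ∀ n, ‖T (t n) f‖ ≤ C := by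
    intro f
    have h2 := (hTcont f).comp hlim
    obtain ⟨C, hC⟩ := h2.bddAbove_range
    refine ⟨C + ‖f‖, fun n => ?_⟩
    have h3 : ‖T (t n) f - f‖ ≤ C := hC ⟨n, rfl⟩
    have h4 := norm_add_le (T (t n) f - f) f
    rw [sub_add_cancel] at h4
    linarith
  obtain ⟨C, hC⟩ := banach_steinhaus hb
  obtain ⟨n, hn⟩ := exists_nat_gt C
  have := lt_of_le_of_lt (le_max_left _ _) (ht2 n)
  linarith [hC n]

theorem aux_cont
    {E : Type*} [NormedAddCommGroup E] [NormedSpace ℝ E]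
    (T : ℝ → E →L[ℝ] E)
    (hT0 : T 0 = 1)
    (hTadd : ∀ s t : ℝ, 0 ≤ s → 0 ≤ t → T (s + t) = (T s).comp (T t))
    (hTcont : ∀ f : E,
      Tendsto (fun t : ℝ => ‖T t f - f‖) (𝓝[>] (0 : ℝ)) (𝓝 0))
    (a M : ℝ) (hM : 0 ≤ M) (hb : ∀ t, 0 ≤ t → t ≤ a → ‖T t‖ ≤ M) (f : E) :
    ContinuousOn (fun s => T s f) (Set.Icc 0 a) := by
  have key : ∀ s u, 0 ≤ s → s ≤ u → u ≤ a → ‖T u f - T s f‖ ≤ M * ‖T (u - s) f - f‖ := by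
    intro s u hs hsu hu
    have h1 : T u = (T s).comp (T (u - s)) := by
      rw [← hTadd s (u - s) hs (by linarith)]; congr 1; ring
    rw [h1, ContinuousLinearMap.comp_apply, ← map_sub]
    exact ((T s).le_opNorm _).trans
      (mul_le_mul_of_nonneg_right (hb s hs (hsu.trans hu)) (norm_nonneg _))
  rw [Metric.continuousOn_iff]
  intro s hs ε hε
  have h2 : ∀ᶠ t in 𝓝[>] (0:ℝ), M * ‖T t f - f‖ < ε := by
    have := (hTcont f).const_mul M
    rw [mul_zero] at this
    exact this.eventually (gt_mem_nhds hε)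
  obtain ⟨δ, hδ, h3⟩ := mem_nhdsGT_iff_exists_Ioo_subset.1 h2
  have hδ : 0 < δ := hδ
  have h4 : ∀ t, 0 ≤ t → t < δ → M * ‖T t f - f‖ < ε := by
    intro t ht htδ
    rcases ht.lt_or_eq with h | h
    · exact h3 ⟨h, htδ⟩
    · rw [← h, hT0]; simpa using hε
  refine ⟨δ, hδ, fun u hu hd => ?_⟩
  rw [Real.dist_eq] at hd
  rw [dist_eq_norm]
  obtain ⟨hd1, hd2⟩ := abs_lt.1 hd
  rcases le_total s u with h | h
  · exact (key s u hs.1 h hu.2).trans_lt (h4 _ (by linarith) (by linarith))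
  · rw [norm_sub_rev]
    exact (key u s hu.1 h hs.2).trans_lt (h4 _ (by linarith) (by linarith))

theorem aux_av
    {E : Type*} [NormedAddCommGroup E] [NormedSpace ℝ E] [CompleteSpace E]
    (T : ℝ → E →L[ℝ] E)
    (hT0 : T 0 = 1)
    (hTadd : ∀ s t : ℝ, 0 ≤ s → 0 ≤ t → T (s + t) = (T s).comp (T t))
    (hTcont : ∀ f : E,
      Tendsto (fun t : ℝ => ‖T t f - f‖) (𝓝[>] (0 : ℝ)) (𝓝 0)) :
    ∃ a > 0, ∃ M ≥ 0, ∃ av : ℝ → E → E, ∀ r, 0 < r → r ≤ a → ∀ f : E,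
      ‖av r f‖ ≤ M * ‖f‖ ∧
      (∀ ε, (∀ s, 0 ≤ s → s ≤ r → ‖T s f - f‖ ≤ ε) → ‖av r f - f‖ ≤ ε) ∧
      (∀ t, 0 ≤ t → t ≤ a → ‖T t (av r f) - av r f‖ ≤ M * ‖T t f - f‖) ∧
      (∀ t, 0 ≤ t → t ≤ a → ‖T t (av r f) - av r f‖ ≤ r⁻¹ * (2 * t * M * ‖f‖)) := by
  obtain ⟨b, hb0, M, hM, hb⟩ := aux_bound T hT0 hTcont
  have hcont := aux_cont T hT0 hTadd hTcont b M hM hb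
  have hint : ∀ f x y, 0 ≤ x → x ≤ b → 0 ≤ y → y ≤ b →
      IntervalIntegrable (fun s => T s f) MeasureTheory.volume x y := by
    intro f x y hx hx' hy hy'
    apply ContinuousOn.intervalIntegrable
    exact (hcont f).mono (Set.uIcc_subset_Icc ⟨hx, hx'⟩ ⟨hy, hy'⟩)
  have hTb : ∀ s, 0 ≤ s → s ≤ b → ∀ g, ‖T s g‖ ≤ M * ‖g‖ := fun s h1 h2 g =>
    ((T s).le_opNorm g).trans (mul_le_mul_of_nonneg_right (hb s h1 h2) (norm_nonneg _))
  have hI : ∀ f x y, 0 ≤ x → x ≤ y → y ≤ b → ‖∫ s in x..y, T s f‖ ≤ M * ‖f‖ * (y - x) := by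
    intro f x y hx hxy hy
    have := intervalIntegral.norm_integral_le_of_norm_le_const (a := x) (b := y)
      (f := fun s => T s f) (C := M * ‖f‖) (fun s hs => by
        rw [Set.uIoc_of_le hxy] at hs
        exact hTb s (hx.trans hs.1.le) (hs.2.trans hy) f)
    rwa [abs_of_nonneg (sub_nonneg.2 hxy)] at this
  refine ⟨b / 2, by positivity, M, hM, fun r f => r⁻¹ • ∫ s in (0:ℝ)..r, T s f, ?_⟩
  intro r hr hrb f
  have hrb' : r ≤ b := by linarith
  have hn : ‖r⁻¹‖ = r⁻¹ := by rw [Real.norm_eq_abs, abs_of_pos (inv_pos.2 hr)]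
  have hAv : ∀ g, ‖r⁻¹ • ∫ s in (0:ℝ)..r, T s g‖ ≤ M * ‖g‖ := by
    intro g
    rw [norm_smul, hn]
    calc r⁻¹ * ‖∫ s in (0:ℝ)..r, T s g‖ ≤ r⁻¹ * (M * ‖g‖ * (r - 0)) := by
          gcongr; exact hI g 0 r le_rfl hr.le hrb'
      _ = M * ‖g‖ := by field_simp; ring
  have hTt : ∀ t, T t (∫ s in (0:ℝ)..r, T s f) = ∫ s in (0:ℝ)..r, T t (T s f) := fun t =>
    ((T t).intervalIntegral_comp_comm (hint f 0 r le_rfl hb0.le hr.le hrb')).symm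
  refine ⟨hAv f, ?_, ?_, ?_⟩
  · intro ε hε
    have h1 : r⁻¹ • (∫ s in (0:ℝ)..r, T s f) - f = r⁻¹ • ∫ s in (0:ℝ)..r, (T s f - f) := by
      rw [intervalIntegral.integral_sub (hint f 0 r le_rfl hb0.le hr.le hrb') (by simp),
        intervalIntegral.integral_const, smul_sub, sub_zero, smul_smul, inv_mul_cancel₀ hr.ne',
        one_smul]
    have h2 : ‖∫ s in (0:ℝ)..r, (T s f - f)‖ ≤ ε * |r - 0| :=
      intervalIntegral.norm_integral_le_of_norm_le_const (fun s hs => by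
        rw [Set.uIoc_of_le hr.le] at hs
        exact hε s hs.1.le hs.2)
    rw [sub_zero, abs_of_pos hr] at h2
    show ‖r⁻¹ • (∫ s in (0:ℝ)..r, T s f) - f‖ ≤ ε
    rw [h1, norm_smul, hn]
    calc r⁻¹ * ‖∫ s in (0:ℝ)..r, (T s f - f)‖ ≤ r⁻¹ * (ε * r) := by gcongr
      _ = ε := by field_simp
  · intro t ht hta
    have h1 : T t (r⁻¹ • ∫ s in (0:ℝ)..r, T s f) - r⁻¹ • (∫ s in (0:ℝ)..r, T s f)
        = r⁻¹ • ∫ s in (0:ℝ)..r, T s (T t f - f) := by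
      have h2 : ∫ s in (0:ℝ)..r, T t (T s f) = ∫ s in (0:ℝ)..r, T s (T t f) := by
        apply intervalIntegral.integral_congr
        intro s hs
        rw [Set.uIcc_of_le hr.le] at hs
        have h3 := hTadd s t hs.1 ht
        rw [add_comm, hTadd t s ht hs.1] at h3
        exact congrArg (fun L : E →L[ℝ] E => L f) h3
      rw [map_smul, hTt, h2, ← smul_sub, ← intervalIntegral.integral_sub
        (hint _ 0 r le_rfl hb0.le hr.le hrb') (hint _ 0 r le_rfl hb0.le hr.le hrb')]
      simp only [map_sub]
    show ‖T t (r⁻¹ • ∫ s in (0:ℝ)..r, T s f) - r⁻¹ • (∫ s in (0:ℝ)..r, T s f)‖ ≤ _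
    rw [h1]
    exact hAv _
  · intro t ht hta
    have h1 : T t (r⁻¹ • ∫ s in (0:ℝ)..r, T s f) - r⁻¹ • (∫ s in (0:ℝ)..r, T s f)
        = r⁻¹ • ((∫ s in r..(r + t), T s f) - ∫ s in (0:ℝ)..t, T s f) := by
      have h2 : ∫ s in (0:ℝ)..r, T t (T s f) = ∫ s in t..(r + t), T s f := by
        have h4 : ∫ s in (0:ℝ)..r, T t (T s f) = ∫ s in (0:ℝ)..r, T (s + t) f := by
          apply intervalIntegral.integral_congr
          intro s hs
          rw [Set.uIcc_of_le hr.le] at hs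
          have h3 := hTadd t s ht hs.1
          rw [add_comm] at h3
          exact congrArg (fun L : E →L[ℝ] E => L f) h3.symm
        rw [h4, intervalIntegral.integral_comp_add_right (fun s => T s f), zero_add]
      have h5 := intervalIntegral.integral_add_adjacent_intervals
        (hint f 0 t le_rfl hb0.le ht (by linarith))
        (hint f t (r + t) ht (by linarith) (by linarith) (by linarith))
      have h6 := intervalIntegral.integral_add_adjacent_intervals
        (hint f 0 r le_rfl hb0.le hr.le (by linarith))
        (hint f r (r + t) hr.le (by linarith) (by linarith) (by linarith))
      rw [map_smul, hTt, h2, ← smul_sub]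
      congr 1
      rw [← h6] at h5
      rw [sub_eq_sub_iff_add_eq_add, add_comm, h5, add_comm]
    show ‖T t (r⁻¹ • ∫ s in (0:ℝ)..r, T s f) - r⁻¹ • (∫ s in (0:ℝ)..r, T s f)‖ ≤ _
    rw [h1, norm_smul, hn]
    gcongr
    have h7 := hI f r (r + t) hr.le (by linarith) (by linarith)
    have h8 := hI f 0 t le_rfl ht (by linarith)
    have h9 := norm_sub_le (∫ s in r..(r + t), T s f) (∫ s in (0:ℝ)..t, T s f)
    nlinarith

theorem aux_nu {I : Type*} (U : Ultrafilter I)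
    (hU : ∃ A : ℕ → Set I, (∀ n, A n ∈ U) ∧ (⋂ n, A n) ∉ U) :
    ∃ ν : I → ℕ, Tendsto ν (U : Filter I) atTop := by
  classical
  obtain ⟨A, hA, hA'⟩ := hU
  refine ⟨fun i => if h : ∃ n, i ∉ A n then Nat.find h else 0, ?_⟩
  rw [tendsto_atTop]
  intro N
  have h1 : ∀ᶠ i in (U : Filter I), i ∉ ⋂ n, A n := Ultrafilter.compl_mem_iff_notMem.2 hA'
  have h2 : ∀ᶠ i in (U : Filter I), ∀ n ∈ Finset.range N, i ∈ A n :=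
    (Filter.eventually_all_finset _).2 fun n _ => hA n
  filter_upwards [h1, h2] with i hi1 hi2
  have h : ∃ n, i ∉ A n := by simpa using hi1
  rw [dif_pos h, Nat.le_find_iff]
  intro m hm
  exact not_not.2 (hi2 m (Finset.mem_range.2 hm))

theorem aux_diag {I : Type*} (U : Ultrafilter I)
    (hU : ∃ A : ℕ → Set I, (∀ n, A n ∈ U) ∧ (⋂ n, A n) ∉ U)
    (P : ℕ → I → Prop) (hP : ∀ n, ∀ᶠ i in (U : Filter I), P n i) :
    ∃ k : I → ℕ, Tendsto k (U : Filter I) atTop ∧ ∀ i, P 0 i → P (k i) i := by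
  classical
  obtain ⟨ν, hν⟩ := aux_nu U hU
  refine ⟨fun i => Nat.findGreatest (fun n => P n i) (ν i), ?_, ?_⟩
  · rw [tendsto_atTop]
    intro N
    filter_upwards [hP N, tendsto_atTop.1 hν N] with i h1 h2
    exact Nat.le_findGreatest h2 h1
  · intro i hi
    exact Nat.findGreatest_spec (P := fun n => P n i) (Nat.zero_le _) hi



theorem nonstandard_hull_eq_F_product_classical
    (E : Type*) [NormedAddCommGroup E] [NormedSpace ℝ E] [CompleteSpace E]
    (T : ℝ → E →L[ℝ] E)
    (hT0 : T 0 = 1)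
    (hTadd : ∀ s t : ℝ, 0 ≤ s → 0 ≤ t → T (s + t) = (T s).comp (T t))
    (hTcont : ∀ f : E,
      Tendsto (fun t : ℝ => ‖T t f - f‖) (𝓝[>] (0 : ℝ)) (𝓝 0))
    (I : Type*) (U : Ultrafilter I)
    (hU : ∃ A : ℕ → Set I, (∀ n, A n ∈ U) ∧ (⋂ n, A n) ∉ U)
    (F : I → E) (hFbd : ∃ C : ℝ, ∀ i : I, ‖F i‖ ≤ C)
    (hF : ∀ h : I → ℝ, (∀ i, 0 ≤ h i) → Tendsto h (U : Filter I) (𝓝 0) →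
      Tendsto (fun i : I => ‖T (h i) (F i) - F i‖) (U : Filter I) (𝓝 0)) :
    ∃ G : I → E, (∃ C : ℝ, ∀ i : I, ‖G i‖ ≤ C) ∧
      Tendsto (fun t : ℝ => ⨆ i : I, ‖T t (G i) - G i‖) (𝓝[>] (0 : ℝ)) (𝓝 0) ∧
      Tendsto (fun i : I => ‖F i - G i‖) (U : Filter I) (𝓝 0) := by


  classical
  obtain ⟨C, hC⟩ := hFbd
  obtain ⟨a, ha, M, hM, av, hav⟩ := aux_av T hT0 hTadd hTcont
  have step1 : ∀ ε > 0, ∃ n : ℕ, ∀ᶠ i in (U : Filter I), ∀ h, 0 ≤ h → h ≤ 1 / ((n : ℝ) + 1) →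
      ‖T h (F i) - F i‖ ≤ ε := by
    intro ε hε
    by_contra hcon
    push Not at hcon
    have hP : ∀ n : ℕ, ∀ᶠ i in (U : Filter I), ∃ h, 0 ≤ h ∧ h ≤ 1 / ((n : ℝ) + 1) ∧
        ε < ‖T h (F i) - F i‖ := hcon
    obtain ⟨k, hk, hk'⟩ := aux_diag U hU _ hP
    have hex : ∀ i, ∃ h : ℝ, 0 ≤ h ∧ ((∃ h, 0 ≤ h ∧ h ≤ 1 / (((0 : ℕ) : ℝ) + 1) ∧
        ε < ‖T h (F i) - F i‖) → h ≤ 1 / ((k i : ℝ) + 1) ∧ ε < ‖T h (F i) - F i‖) := by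
      intro i
      by_cases h0 : ∃ h, 0 ≤ h ∧ h ≤ 1 / (((0 : ℕ) : ℝ) + 1) ∧ ε < ‖T h (F i) - F i‖
      · obtain ⟨h, h1, h2⟩ := hk' i h0
        exact ⟨h, h1, fun _ => h2⟩
      · exact ⟨0, le_rfl, fun h => absurd h h0⟩
    choose h hh0 hh using hex
    have hlim : Tendsto h (U : Filter I) (𝓝 0) := by
      refine squeeze_zero' (Eventually.of_forall hh0) ?_
        (tendsto_one_div_add_atTop_nhds_zero_nat.comp hk)
      filter_upwards [hP 0] with i hi
      exact (hh i hi).1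
    have h1 := (hF h hh0 hlim).eventually (gt_mem_nhds hε)
    obtain ⟨i, hi1, hi2⟩ := (h1.and (hP 0)).exists
    exact absurd hi1 (not_lt.2 (hh i hi2).2.le)
  have step2 : ∀ k : ℕ, ∃ δ : ℝ, 0 < δ ∧ δ ≤ a ∧ ∀ᶠ i in (U : Filter I), ∀ h, 0 ≤ h → h ≤ δ →
      ‖T h (F i) - F i‖ ≤ 1 / ((k : ℝ) + 1) := by
    intro k
    obtain ⟨n, hn⟩ := step1 (1 / ((k : ℝ) + 1)) (by positivity)
    refine ⟨min a (1 / ((n : ℝ) + 1)), lt_min ha (by positivity), min_le_left _ _, ?_⟩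
    filter_upwards [hn] with i hi h h0 h1
    exact hi h h0 (h1.trans (min_le_right _ _))
  choose δ hδ0 hδa hQ using step2
  have hQ' : ∀ n : ℕ, ∀ᶠ i in (U : Filter I), ∀ m ≤ n, ∀ h, 0 ≤ h → h ≤ δ m →
      ‖T h (F i) - F i‖ ≤ 1 / ((m : ℝ) + 1) := by
    intro n
    have := (Filter.eventually_all_finset (Finset.range (n + 1))).2 fun m _ => hQ m
    filter_upwards [this] with i hi m hm
    exact hi m (Finset.mem_range.2 (by omega))
  obtain ⟨k, hk, hk'⟩ := aux_diag U hU _ hQ'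
  set Z : I → Prop := fun i => ∀ m ≤ 0, ∀ h, 0 ≤ h → h ≤ δ m →
      ‖T h (F i) - F i‖ ≤ 1 / ((m : ℝ) + 1) with hZ
  have hk'' : ∀ i, Z i → ∀ m ≤ k i, ∀ h, 0 ≤ h → h ≤ δ m →
      ‖T h (F i) - F i‖ ≤ 1 / ((m : ℝ) + 1) := hk'
  have hZU : ∀ᶠ i in (U : Filter I), Z i := hQ' 0
  refine ⟨fun i => if Z i then av (δ (k i)) (F i) else 0, ⟨M * |C|, ?_⟩, ?_, ?_⟩
  · intro i
    dsimp only
    split_ifs with h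
    · refine (hav _ (hδ0 _) (hδa _) (F i)).1.trans ?_
      gcongr
      exact (hC i).trans (le_abs_self C)
    · rw [norm_zero]; positivity
  · rw [Metric.tendsto_nhds]
    intro ε' hε'
    obtain ⟨ε, hε, hεε'⟩ := exists_between hε'
    obtain ⟨j, hj⟩ := exists_nat_gt (M / ε)
    have hj' : M * (1 / ((j : ℝ) + 1)) ≤ ε := by
      rw [div_lt_iff₀ hε] at hj
      rw [mul_one_div, div_le_iff₀ (by positivity)]
      nlinarith
    obtain ⟨c, hc0, hc⟩ : ∃ c > 0, ∀ m ≤ j, c ≤ δ m := by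
      refine ⟨(Finset.range (j + 1)).inf' ⟨0, by simp⟩ δ, ?_, ?_⟩
      · exact (Finset.lt_inf'_iff _).2 fun m _ => hδ0 m
      · intro m hm
        exact Finset.inf'_le _ (Finset.mem_range.2 (by omega))
    have hd : 0 < min (min a c) (c * ε / (2 * M * |C| + 1)) :=
      lt_min (lt_min ha hc0) (by positivity)
    filter_upwards [Ioo_mem_nhdsGT hd] with t ht
    obtain ⟨ht0, ht1⟩ := ht
    obtain ⟨ht1, ht2⟩ := lt_min_iff.1 ht1
    obtain ⟨hta, htc⟩ := lt_min_iff.1 ht1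
    rw [lt_div_iff₀ (by positivity)] at ht2
    rw [Real.dist_eq, sub_zero, abs_of_nonneg (Real.iSup_nonneg fun i => norm_nonneg _)]
    refine lt_of_le_of_lt (Real.iSup_le (fun i => ?_) hε.le) hεε'
    split_ifs with h
    · obtain ⟨-, -, h3, h4⟩ := hav _ (hδ0 (k i)) (hδa _) (F i)
      rcases le_total j (k i) with hjk | hjk
      · refine (h3 t ht0.le hta.le).trans (le_trans ?_ hj')
        gcongr
        exact hk'' i h j hjk t ht0.le (htc.le.trans (hc j le_rfl))
      · refine (h4 t ht0.le hta.le).trans ?_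
        have h5 := hc _ hjk
        have h6 : 2 * t * M * ‖F i‖ ≤ 2 * t * M * |C| := by
          gcongr
          exact (hC i).trans (le_abs_self C)
        rw [inv_mul_le_iff₀ (hδ0 _)]
        have h7 : c * ε ≤ δ (k i) * ε := by gcongr
        nlinarith
    · simpa using hε.le
  · refine squeeze_zero' (Eventually.of_forall fun i => norm_nonneg _) ?_
      (tendsto_one_div_add_atTop_nhds_zero_nat.comp hk)
    filter_upwards [hZU] with i hi
    rw [if_pos hi, norm_sub_rev]
    exact (hav _ (hδ0 (k i)) (hδa _) (F i)).2.1 _ (hk'' i hi (k i) le_rfl)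
end
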